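/- arXiv:0801.4285 — 3 statements merged into one kernel-verified Lean document; each statement's English description precedes it below -/
import Mathlib

section
/- Let T > 0. For every measurable function v : [0,T] → {-1,1}, the cost J(v) = ∫₀ᵀ (∫₀ᵗ v_s ds)² dt is strictly positive. In particular, no strict control attains the infimum value 0 of the cost. -/
open MeasureTheory intervalIntegral Set

/-- For every measurable strict control `v : [0,T] → {-1,1}`, the
cost `J(v) = ∫₀ᵀ (∫₀ᵗ v_s ds)² dt` is strictly positive; hence no strict
control attains the infimum value `0` of the cost. -/
theorem cost_strict_control_pos (T : ℝ) (hT : 0 < T) (v : ℝ → ℝ)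
    (hv : Measurable v) (hval : ∀ t ∈ Set.Icc (0 : ℝ) T, v t = -1 ∨ v t = 1) :
    0 < ∫ t in (0 : ℝ)..T, (∫ s in (0 : ℝ)..t, v s) ^ 2 := by
  have hint : IntegrableOn v (Icc 0 T) := by
    refine Measure.integrableOn_of_bounded (M := 1) (by simp) hv.aestronglyMeasurable ?_
    refine (ae_restrict_iff' measurableSet_Icc).2 (Filter.Eventually.of_forall fun t ht => ?_)
    rcases hval t ht with h | h <;> simp [h]
  have hii : IntervalIntegrable v volume 0 T :=
    (intervalIntegrable_iff_integrableOn_Icc_of_le hT.le).2 hint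
  have hcont : ContinuousOn (fun t => ∫ s in (0 : ℝ)..t, v s) (Icc 0 T) := by
    have := continuousOn_primitive_interval' hii (left_mem_uIcc)
    rwa [uIcc_of_le hT.le] at this
  refine intervalIntegral.integral_pos hT (hcont.pow 2) (fun _ _ => sq_nonneg _) ?_
  by_contra! hcon
  have hzero : ∀ t ∈ Icc (0 : ℝ) T, ∫ s in (0 : ℝ)..t, v s = 0 := fun t ht =>
    pow_eq_zero_iff (two_ne_zero) |>.1 (le_antisymm (hcon t ht) (sq_nonneg _))
  have hae := hii.ae_hasDerivAt_integral
  rw [uIcc_of_le hT.le] at hae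
  have hnot : ∀ᵐ x : ℝ, x ∉ Ioo (0 : ℝ) T := by
    filter_upwards [hae] with x hx hxI
    have hd := hx (Ioo_subset_Icc_self hxI) 0 (left_mem_Icc.2 hT.le)
    have hd0 : HasDerivAt (fun x => ∫ t in (0 : ℝ)..x, v t) 0 x := by
      refine (hasDerivAt_const x (0 : ℝ)).congr_of_eventuallyEq ?_
      filter_upwards [Ioo_mem_nhds hxI.1 hxI.2] with y hy
      exact hzero y (Ioo_subset_Icc_self hy)
    have h0 := hd.unique hd0
    rcases hval x (Ioo_subset_Icc_self hxI) with h | h <;> norm_num [h] at h0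
  have hm : volume (Ioo (0 : ℝ) T) = 0 := by
    rw [ae_iff] at hnot
    simpa only [not_not, setOf_mem_eq] using hnot
  rw [Real.volume_Ioo] at hm
  simp at hm
  linarith
end

section
/- Let T > 0 and, for each natural number n ≥ 1, define the control vⁿ : [0,T] → {-1,1} by vⁿ_t = (-1)^k whenever kT/n ≤ t < (k+1)T/n, for 0 ≤ k ≤ n-1. Then the cost satisfies J(vⁿ) = ∫₀ᵀ (∫₀ᵗ vⁿ_s ds)² dt ≤ T³/n². In particular J(vⁿ) → 0 as n → ∞. -/
open MeasureTheory intervalIntegral Set Filter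

lemma acc_piece (f : ℝ → ℝ) (a b c : ℝ) (hf : ∀ t ∈ Set.Ico a b, f t = c)
    (t : ℝ) (hat : a ≤ t) (htb : t ≤ b) :
    IntervalIntegrable f volume a t ∧ ∫ s in a..t, f s = c * (t - a) := by
  have h : ∀ᵐ s ∂(volume : Measure ℝ), s ∈ Set.uIoc a t → c = f s := by
    have : ∀ᵐ s ∂(volume : Measure ℝ), s ≠ t := by
      simp [ae_iff]
    filter_upwards [this] with s hs hs2
    rw [uIoc_of_le hat] at hs2
    exact (hf s ⟨hs2.1.le, lt_of_lt_of_le (lt_of_le_of_ne hs2.2 hs) htb⟩).symm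
  constructor
  · have h0 : IntervalIntegrable (fun _ : ℝ => c) volume a t := intervalIntegrable_const
    refine h0.congr_ae ?_
    exact (ae_restrict_iff' measurableSet_uIoc).2 h
  · rw [← integral_congr_ae h]
    simp [mul_comm]

lemma acc_node (f : ℝ → ℝ) (h : ℝ) (hh : 0 < h) (n : ℕ)
    (hf : ∀ k < n, ∀ t ∈ Set.Ico ((k : ℝ) * h) (((k : ℝ) + 1) * h), f t = (-1 : ℝ) ^ k)
    (k : ℕ) (hk : k ≤ n) :
    IntervalIntegrable f volume 0 (k * h) ∧
      ∫ s in (0 : ℝ)..(k * h), f s = (1 - (-1) ^ k) / 2 * h := by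
  induction k with
  | zero => simp
  | succ k ih =>
    obtain ⟨i1, i2⟩ := ih (by omega)
    obtain ⟨j1, j2⟩ := acc_piece f _ _ _ (hf k (by omega)) (((k : ℝ) + 1) * h)
      (by nlinarith) le_rfl
    push_cast
    refine ⟨i1.trans j1, ?_⟩
    rw [← integral_add_adjacent_intervals i1 j1, i2, j2]
    ring

lemma acc_bound (f : ℝ → ℝ) (h : ℝ) (hh : 0 < h) (n : ℕ)
    (hf : ∀ k < n, ∀ t ∈ Set.Ico ((k : ℝ) * h) (((k : ℝ) + 1) * h), f t = (-1 : ℝ) ^ k)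
    (t : ℝ) (ht0 : 0 < t) (htn : t ≤ n * h) :
    |∫ s in (0 : ℝ)..t, f s| ≤ h := by
  have hc : 0 < ⌈t / h⌉₊ := Nat.ceil_pos.2 (by positivity)
  obtain ⟨k, hk⟩ : ∃ k, ⌈t / h⌉₊ = k + 1 := ⟨⌈t / h⌉₊ - 1, by omega⟩
  have hkn : k + 1 ≤ n := by
    rw [← hk]
    exact Nat.ceil_le.2 ((div_le_iff₀ hh).2 htn)
  have h1 : t ≤ ((k : ℝ) + 1) * h := by
    have := Nat.le_ceil (t / h)
    rw [hk, div_le_iff₀ hh] at this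
    exact_mod_cast this
  have h2 : (k : ℝ) * h ≤ t := by
    have : k < ⌈t / h⌉₊ := by omega
    have := Nat.lt_ceil.1 this
    rw [lt_div_iff₀ hh] at this
    exact this.le
  obtain ⟨i1, i2⟩ := acc_node f h hh n hf k (by omega)
  obtain ⟨j1, j2⟩ := acc_piece f _ _ _ (hf k (by omega)) t h2 h1
  rw [← integral_add_adjacent_intervals i1 j1, i2, j2, abs_le]
  rcases neg_one_pow_eq_or ℝ k with e | e <;> rw [e] <;> constructor <;> nlinarith

/-- For the alternating controls `vⁿ` (equal to `(-1)^k` on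
`[kT/n, (k+1)T/n)` for `0 ≤ k ≤ n-1`), the cost satisfies
`J(vⁿ) = ∫₀ᵀ (∫₀ᵗ vⁿ_s ds)² dt ≤ T³/n²`, and in particular `J(vⁿ) → 0`
as `n → ∞`. -/
theorem alternating_control_cost_bound (T : ℝ) (hT : 0 < T) (v : ℕ → ℝ → ℝ)
    (hmeas : ∀ n, Measurable (v n))
    (hv : ∀ n : ℕ, 1 ≤ n → ∀ k < n,
      ∀ t ∈ Set.Ico ((k : ℝ) * T / n) (((k : ℝ) + 1) * T / n),
        v n t = (-1 : ℝ) ^ k) :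
    (∀ n : ℕ, 1 ≤ n →
      (∫ t in (0 : ℝ)..T, (∫ s in (0 : ℝ)..t, v n s) ^ 2) ≤ T ^ 3 / n ^ 2) ∧
    Tendsto (fun n : ℕ => ∫ t in (0 : ℝ)..T, (∫ s in (0 : ℝ)..t, v n s) ^ 2)
      atTop (nhds 0) := by
  have main : ∀ n : ℕ, 1 ≤ n →
      (∫ t in (0 : ℝ)..T, (∫ s in (0 : ℝ)..t, v n s) ^ 2) ≤ T ^ 3 / n ^ 2 := by
    intro n hn
    have hn0 : (0 : ℝ) < n := by exact_mod_cast hn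
    have key : ‖∫ t in (0 : ℝ)..T, (∫ s in (0 : ℝ)..t, v n s) ^ 2‖ ≤ (T / n) ^ 2 * |T - 0| := by
      refine norm_integral_le_of_norm_le_const ?_
      intro t ht
      rw [uIoc_of_le hT.le] at ht
      have hb := acc_bound (v n) (T / n) (by positivity) n
        (fun k hk t ht => hv n hn k hk t (by simpa only [mul_div_assoc] using ht)) t ht.1
        (by rw [mul_div_cancel₀ _ hn0.ne']; exact ht.2)
      rw [Real.norm_eq_abs, abs_pow]
      exact pow_le_pow_left₀ (abs_nonneg _) hb 2
    refine (le_abs_self _).trans (key.trans (le_of_eq ?_))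
    rw [sub_zero, abs_of_pos hT]
    field_simp
  refine ⟨main, ?_⟩
  refine tendsto_of_tendsto_of_tendsto_of_le_of_le' (g := fun _ => (0 : ℝ))
    (h := fun n : ℕ => T ^ 3 / (n : ℝ) ^ 2) tendsto_const_nhds ?_ ?_ ?_
  · refine Tendsto.const_div_atTop ?_ _
    exact (tendsto_pow_atTop two_ne_zero).comp tendsto_natCast_atTop_atTop
  · exact Eventually.of_forall fun n => integral_nonneg hT.le fun t _ => sq_nonneg _
  · filter_upwards [eventually_ge_atTop 1] with n hn using main n hn
end

section
/- Let T > 0. For every measurable function v : [0,T] → [-1,1], the cost J(v) = ∫₀ᵀ [ (∫₀ᵗ v_s ds)² + (1 - v_t²)² ] dt is strictly positive. In particular, this control problem has no optimal strict control: no measurable v : [0,T] → [-1,1] attains the infimum value 0 of the cost. -/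
open MeasureTheory intervalIntegral Set

/-- For every measurable strict control `v : [0,T] → [-1,1]`, the
cost `J(v) = ∫₀ᵀ [ (∫₀ᵗ v_s ds)² + (1 - v_t²)² ] dt` is strictly positive;
hence no strict control attains the infimum value `0` of the cost. -/
theorem cost_second_example_pos (T : ℝ) (hT : 0 < T) (v : ℝ → ℝ)
    (hv : Measurable v) (hval : ∀ t ∈ Set.Icc (0 : ℝ) T, v t ∈ Set.Icc (-1 : ℝ) 1) :
    0 < ∫ t in (0 : ℝ)..T,
        ((∫ s in (0 : ℝ)..t, v s) ^ 2 + (1 - (v t) ^ 2) ^ 2) := by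
  have hfin : volume (Icc (0:ℝ) T) ≠ ⊤ := by simp
  have hvI : IntegrableOn v (Icc 0 T) := by
    refine Measure.integrableOn_of_bounded (M := 1) hfin hv.aestronglyMeasurable ?_
    filter_upwards [ae_restrict_mem measurableSet_Icc] with t ht
    have := hval t ht
    exact abs_le.2 this
  have hvi : IntervalIntegrable v volume 0 T :=
    (intervalIntegrable_iff_integrableOn_Icc_of_le hT.le).2 hvI
  have hF : ContinuousOn (fun t => ∫ s in (0 : ℝ)..t, v s) (Icc 0 T) := by
    have := intervalIntegral.continuousOn_primitive_interval (a := 0) (b := T) (μ := volume)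
      (f := v) (by rwa [uIcc_of_le hT.le])
    rwa [uIcc_of_le hT.le] at this
  have h1 : IntervalIntegrable (fun t => (∫ s in (0 : ℝ)..t, v s) ^ 2) volume 0 T := by
    apply ContinuousOn.intervalIntegrable
    rw [uIcc_of_le hT.le]
    exact hF.pow 2
  have h2 : IntervalIntegrable (fun t => (1 - (v t) ^ 2) ^ 2) volume 0 T := by
    rw [intervalIntegrable_iff_integrableOn_Icc_of_le hT.le]
    refine Measure.integrableOn_of_bounded (M := 1) hfin
      (by fun_prop : Measurable fun t => (1 - (v t) ^ 2) ^ 2).aestronglyMeasurable ?_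
    filter_upwards [ae_restrict_mem measurableSet_Icc] with t ht
    have := hval t ht
    have h3 : v t ^ 2 ≤ 1 := by nlinarith [this.1, this.2]
    rw [Real.norm_eq_abs, abs_of_nonneg (sq_nonneg _)]
    nlinarith [sq_nonneg (v t)]
  have hnn : ∀ t, 0 ≤ (∫ s in (0 : ℝ)..t, v s) ^ 2 + (1 - (v t) ^ 2) ^ 2 :=
    fun t => by positivity
  by_contra hcon
  have hz := le_antisymm (not_lt.1 hcon)
    (intervalIntegral.integral_nonneg hT.le (fun t _ => hnn t))
  rw [intervalIntegral.integral_eq_zero_iff_of_le_of_nonneg_ae hT.le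
    (Filter.Eventually.of_forall hnn) (h1.add h2), restrict_Ioc_eq_restrict_Icc] at hz
  have hF0 : EqOn (fun t => ∫ s in (0 : ℝ)..t, v s) (fun _ => 0) (Icc 0 T) := by
    refine Measure.eqOn_Icc_of_ae_eq volume hT.ne ?_ hF continuousOn_const
    filter_upwards [hz] with t ht
    simp only [Pi.zero_apply] at ht
    nlinarith [sq_nonneg (∫ s in (0 : ℝ)..t, v s), sq_nonneg (1 - (v t) ^ 2)]
  have hd := hvi.ae_hasDerivAt_integral
  have hall : ∀ᵐ t, t ∈ Ioo 0 T → False := by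
    filter_upwards [hd, (ae_restrict_iff' measurableSet_Icc).1 hz] with t htd htz ht
    have hm : t ∈ Icc 0 T := Ioo_subset_Icc_self ht
    have hd1 := htd (by rwa [uIcc_of_le hT.le]) 0 (by simp [hT.le])
    have hd2 : HasDerivAt (fun t => ∫ s in (0 : ℝ)..t, v s) 0 t := by
      refine (hasDerivAt_const t (0:ℝ)).congr_of_eventuallyEq ?_
      filter_upwards [Ioo_mem_nhds ht.1 ht.2] with x hx
      exact hF0 (Ioo_subset_Icc_self hx)
    have hv0 := hd1.unique hd2
    have := htz hm
    simp only [Pi.zero_apply, hv0] at this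
    nlinarith [sq_nonneg (∫ s in (0 : ℝ)..t, v s)]
  have hne : volume (Ioo (0:ℝ) T) = 0 := by
    rw [ae_iff] at hall
    simp only [imp_false, not_not] at hall
    exact hall
  simp at hne
  linarith
end
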